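/- There is a constant C, depending only on the dimension n, with the following property. Let n ≥ 2 and let d : ℝⁿ → ℝ³ be smooth with |d(x)| = 1 for all x and with ∇d a Schwartz function. Then ∫_{ℝⁿ} Δ(|∇d|² d)·Δd dx ≤ C( ‖∇d‖_{L^∞}² ‖Δd‖_{L²} ‖∇²d‖_{L²} + ‖∇d‖_{L^∞} ‖∇²d‖_{L²} ‖∇Δd‖_{L²} + ‖∇d‖_{L^∞}² ‖Δd‖_{L²}² ). -/

import Mathlib

open MeasureTheory Real

noncomputable section

/-- `pd i f x` is the `i`-th partial derivative `∂ᵢ f (x)` of `f : ℝⁿ → ℝ`. -/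
def pd {n : ℕ} (i : Fin n) (f : EuclideanSpace ℝ (Fin n) → ℝ)
    (x : EuclideanSpace ℝ (Fin n)) : ℝ :=
  fderiv ℝ f x (EuclideanSpace.single i 1)

/-- `lap f x` is the Laplacian `Δf(x) = Σᵢ ∂ᵢ∂ᵢ f (x)`. -/
def lap {n : ℕ} (f : EuclideanSpace ℝ (Fin n) → ℝ)
    (x : EuclideanSpace ℝ (Fin n)) : ℝ :=
  ∑ i, pd i (fun y => pd i f y) x

/-- ‖∇d‖_{L^∞}: essential supremum of |∇d| for d : ℝⁿ → ℝ³. -/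
def gradLinf {n : ℕ} (d : EuclideanSpace ℝ (Fin n) → EuclideanSpace ℝ (Fin 3)) : ℝ :=
  essSup (fun x => Real.sqrt (∑ i, ∑ k : Fin 3, (pd i (fun z => d z k) x) ^ 2)) volume

/-- ‖Δd‖_{L²} for d : ℝⁿ → ℝ³. -/
def lapL2 {n : ℕ} (d : EuclideanSpace ℝ (Fin n) → EuclideanSpace ℝ (Fin 3)) : ℝ :=
  Real.sqrt (∑ k : Fin 3, ∫ x, (lap (fun z => d z k) x) ^ 2)

/-- ‖∇²d‖_{L²} for d : ℝⁿ → ℝ³. -/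
def hessL2 {n : ℕ} (d : EuclideanSpace ℝ (Fin n) → EuclideanSpace ℝ (Fin 3)) : ℝ :=
  Real.sqrt (∑ i, ∑ j, ∑ k : Fin 3, ∫ x, (pd i (pd j (fun z => d z k)) x) ^ 2)

/-- ‖∇Δd‖_{L²} for d : ℝⁿ → ℝ³. -/
def gradLapL2 {n : ℕ} (d : EuclideanSpace ℝ (Fin n) → EuclideanSpace ℝ (Fin 3)) : ℝ :=
  Real.sqrt (∑ i, ∑ k : Fin 3, ∫ x, (pd i (lap (fun z => d z k)) x) ^ 2)

/-- ‖∇u‖_{L²} for a vector field u : ℝⁿ → ℝⁿ. -/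
def gradL2u {n : ℕ} (u : EuclideanSpace ℝ (Fin n) → EuclideanSpace ℝ (Fin n)) : ℝ :=
  Real.sqrt (∑ i, ∑ j, ∫ x, (pd i (fun y => u y j) x) ^ 2)

/-- ‖Δu‖_{L²} for a vector field u : ℝⁿ → ℝⁿ. -/
def lapL2u {n : ℕ} (u : EuclideanSpace ℝ (Fin n) → EuclideanSpace ℝ (Fin n)) : ℝ :=
  Real.sqrt (∑ i, ∫ x, (lap (fun y => u y i) x) ^ 2)


abbrev En (n : ℕ) := EuclideanSpace ℝ (Fin n)

/-- Being (the function underlying) a Schwartz function. -/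
def IsS {n : ℕ} (f : En n → ℝ) : Prop := ∃ g : SchwartzMap (En n) ℝ, ∀ x, g x = f x

namespace IsS

variable {n : ℕ} {f h : En n → ℝ}

lemma exists_eq (hf : IsS f) : ∃ g : SchwartzMap (En n) ℝ, f = ⇑g := by
  obtain ⟨g, hg⟩ := hf
  exact ⟨g, funext fun x => (hg x).symm⟩

lemma temperate (hf : IsS f) : f.HasTemperateGrowth := by
  obtain ⟨g, rfl⟩ := hf.exists_eq
  exact g.hasTemperateGrowth

lemma integrable (hf : IsS f) : Integrable f := by
  obtain ⟨g, rfl⟩ := hf.exists_eq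
  exact g.integrable

lemma continuous (hf : IsS f) : Continuous f := by
  obtain ⟨g, rfl⟩ := hf.exists_eq
  exact g.continuous

lemma differentiable (hf : IsS f) : Differentiable ℝ f := by
  obtain ⟨g, rfl⟩ := hf.exists_eq
  exact g.differentiable

lemma bdd (hf : IsS f) : ∃ C, ∀ x, |f x| ≤ C := by
  obtain ⟨g, rfl⟩ := hf.exists_eq
  exact ⟨_, fun x => g.norm_le_seminorm ℝ x⟩

lemma tmul (hf : IsS f) (hh : h.HasTemperateGrowth) : IsS (fun x => h x * f x) := by
  obtain ⟨g, rfl⟩ := hf.exists_eq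
  exact ⟨SchwartzMap.smulLeftCLM ℝ h g, fun x => by
    rw [SchwartzMap.smulLeftCLM_apply_apply hh]; simp⟩

lemma mul (hf : IsS f) (hh : IsS h) : IsS (fun x => f x * h x) := hh.tmul hf.temperate

lemma sq (hf : IsS f) : IsS (fun x => f x ^ 2) := by
  simpa only [_root_.sq] using hf.mul hf

lemma sum {ι : Type*} {s : Finset ι} {F : ι → En n → ℝ} (hF : ∀ i, IsS (F i)) :
    IsS (fun x => ∑ i ∈ s, F i x) := by
  choose g hg using hF
  refine ⟨∑ i ∈ s, g i, fun x => ?_⟩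
  simp [hg]

lemma pd (hf : IsS f) (i : Fin n) : IsS (pd i f) := by
  obtain ⟨g, rfl⟩ := hf.exists_eq
  exact ⟨LineDeriv.lineDerivOp (EuclideanSpace.single i (1 : ℝ)) g, fun x => rfl⟩

lemma ibp (hf : IsS f) (hh : IsS h) (i : Fin n) :
    ∫ x, _root_.pd i f x * h x = - ∫ x, f x * _root_.pd i h x := by
  have := integral_mul_fderiv_eq_neg_fderiv_mul_of_integrable (μ := volume)
    (v := EuclideanSpace.single i (1 : ℝ))
    ((hf.pd i).mul hh).integrable (hf.mul (hh.pd i)).integrable (hf.mul hh).integrable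
    (fun x _ => hf.differentiable x) (fun x _ => hh.differentiable x)
  unfold _root_.pd
  rw [this, neg_neg]

lemma lap (hf : ∀ i, IsS (_root_.pd i f)) : IsS (lap f) := by
  unfold _root_.lap
  exact sum fun i => (hf i).pd i

end IsS

lemma pd_mul {n : ℕ} {f h : En n → ℝ} (i : Fin n) (x : En n)
    (hf : DifferentiableAt ℝ f x) (hh : DifferentiableAt ℝ h x) :
    pd i (fun y => f y * h y) x = pd i f x * h x + f x * pd i h x := by
  unfold pd
  rw [fderiv_fun_mul hf hh]
  simp
  ring

lemma pd_sum {n : ℕ} {ι : Type*} {s : Finset ι} {F : ι → En n → ℝ} (i : Fin n) (x : En n)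
    (hF : ∀ j, DifferentiableAt ℝ (F j) x) :
    pd i (fun y => ∑ j ∈ s, F j y) x = ∑ j ∈ s, pd i (F j) x := by
  unfold pd
  rw [fderiv_fun_sum (fun j _ => hF j)]
  simp

lemma temperate_of_pd {n : ℕ} {f : En n → ℝ} (hf : Differentiable ℝ f)
    (hS : ∀ i, IsS (pd i f)) (C : ℝ) (hb : ∀ x, |f x| ≤ C) : f.HasTemperateGrowth := by
  refine Function.HasTemperateGrowth.of_fderiv (C := C) (k := 0) ?_ hf (by simpa using hb)
  have : fderiv ℝ f = fun x => ∑ i, pd i f x • (EuclideanSpace.proj i : En n →L[ℝ] ℝ) := by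
    ext x v
    have hv : v = ∑ i, v i • EuclideanSpace.single i (1 : ℝ) := by
      simpa using ((EuclideanSpace.basisFun (Fin n) ℝ).sum_repr v).symm
    conv_lhs => rw [hv]
    simp [pd, mul_comm]
  rw [this]
  have ht := fun i => (hS i).temperate
  refine Function.HasTemperateGrowth.sum fun i _ => ?_
  exact (ht i).smul (Function.HasTemperateGrowth.const _)

lemma cs1 {ι : Type*} [Fintype ι] (a b : ι → ℝ) :
    ∑ i, a i * b i ≤ √(∑ i, a i ^ 2) * √(∑ i, b i ^ 2) :=
  Real.sum_mul_le_sqrt_mul_sqrt _ _ _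

lemma cs2 {ι κ : Type*} [Fintype ι] [Fintype κ] (a b : ι → κ → ℝ) :
    ∑ i, ∑ k, a i k * b i k ≤ √(∑ i, ∑ k, a i k ^ 2) * √(∑ i, ∑ k, b i k ^ 2) := by
  have := cs1 (fun p : ι × κ => a p.1 p.2) (fun p : ι × κ => b p.1 p.2)
  simpa only [Fintype.sum_prod_type] using this

lemma sum_sq_mul {ι κ : Type*} [Fintype ι] [Fintype κ] (p : ι → ℝ) (q : κ → ℝ) :
    ∑ i, ∑ k, (p i * q k) ^ 2 = (∑ i, p i ^ 2) * ∑ k, q k ^ 2 := by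
  rw [Finset.sum_mul_sum]
  simp only [mul_pow]

lemma pointwise {n : ℕ} (g : Fin n → Fin 3 → ℝ) (H : Fin n → Fin n → Fin 3 → ℝ)
    (L D : Fin 3 → ℝ) (T : Fin n → Fin 3 → ℝ) (P : Fin n → ℝ) (M : ℝ)
    (hP : ∀ i, P i = 2 * ∑ j, ∑ l, g j l * H i j l)
    (hD : ∑ k, D k ^ 2 = 1) (hM : √(∑ i, ∑ k, g i k ^ 2) ≤ M) :
    ∑ k, ∑ i, (P i * g i k * L k - P i * D k * T i k) + (∑ i, ∑ k, g i k ^ 2) * ∑ k, L k ^ 2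
      ≤ 2 * M ^ 2 * (√(∑ k, L k ^ 2) * √(∑ i, ∑ j, ∑ k, H i j k ^ 2))
        + 2 * M * (√(∑ i, ∑ j, ∑ k, H i j k ^ 2) * √(∑ i, ∑ k, T i k ^ 2))
        + M ^ 2 * ∑ k, L k ^ 2 := by
  set G := √(∑ i, ∑ k, g i k ^ 2) with hG
  set A := √(∑ i, ∑ j, ∑ k, H i j k ^ 2) with hA
  set B := √(∑ k, L k ^ 2) with hB
  set E := √(∑ i, ∑ k, T i k ^ 2) with hE
  have hG0 : 0 ≤ G := Real.sqrt_nonneg _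
  have hA0 : 0 ≤ A := Real.sqrt_nonneg _
  have hB0 : 0 ≤ B := Real.sqrt_nonneg _
  have hE0 : 0 ≤ E := Real.sqrt_nonneg _
  have hG2 : ∑ i, ∑ k, g i k ^ 2 = G ^ 2 := by
    rw [hG, Real.sq_sqrt (by positivity)]
  have hA2 : ∑ i, ∑ j, ∑ k, H i j k ^ 2 = A ^ 2 := by
    rw [hA, Real.sq_sqrt (by positivity)]
  have hB2 : ∑ k, L k ^ 2 = B ^ 2 := by
    rw [hB, Real.sq_sqrt (by positivity)]
  clear_value G A B E
  have hPi : ∀ i, P i ^ 2 ≤ (2 * G) ^ 2 * ∑ j, ∑ l, H i j l ^ 2 := by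
    intro i
    have h1 := cs2 g (H i)
    have h2 := cs2 (fun j l => - g j l) (H i)
    simp only [neg_mul, Finset.sum_neg_distrib, neg_sq] at h2
    rw [← hG] at h1 h2
    have h3 : (∑ j, ∑ l, g j l * H i j l) ^ 2 ≤ (G * √(∑ j, ∑ l, H i j l ^ 2)) ^ 2 :=
      sq_le_sq' (by linarith) h1
    rw [mul_pow, Real.sq_sqrt (by positivity)] at h3
    rw [hP, mul_pow, mul_pow, mul_assoc]
    exact mul_le_mul_of_nonneg_left h3 (by norm_num)
  have hPs : √(∑ i, P i ^ 2) ≤ 2 * G * A := by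
    apply Real.sqrt_le_iff.2
    refine ⟨by positivity, ?_⟩
    calc ∑ i, P i ^ 2 ≤ ∑ i, (2 * G) ^ 2 * ∑ j, ∑ l, H i j l ^ 2 :=
          Finset.sum_le_sum fun i _ => hPi i
      _ = (2 * G * A) ^ 2 := by rw [← Finset.mul_sum, hA2]; ring
  have t1 : ∑ k, ∑ i, P i * g i k * L k ≤ (2 * G * A * B) * G := by
    have := cs2 (fun i k => P i * L k) g
    rw [sum_sq_mul, Real.sqrt_mul (by positivity)] at this
    rw [Finset.sum_comm]
    calc _ = ∑ i, ∑ k, P i * L k * g i k := by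
            refine Finset.sum_congr rfl fun i _ => Finset.sum_congr rfl fun k _ => ?_
            ring
      _ ≤ _ := this
      _ ≤ _ := by rw [← hB, ← hG]; gcongr
  have t2 : ∑ k, ∑ i, - (P i * D k * T i k) ≤ (2 * G * A) * E := by
    have := cs2 (fun i k => P i * D k) (fun i k => - T i k)
    rw [sum_sq_mul, hD, mul_one] at this
    simp only [neg_sq] at this
    rw [Finset.sum_comm]
    calc _ = ∑ i, ∑ k, P i * D k * - T i k := by
            refine Finset.sum_congr rfl fun i _ => Finset.sum_congr rfl fun k _ => ?_
            ring
      _ ≤ _ := this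
      _ ≤ _ := by rw [← hE]; gcongr
  have hsplit : ∑ k, ∑ i, (P i * g i k * L k - P i * D k * T i k)
      = ∑ k, ∑ i, P i * g i k * L k + ∑ k, ∑ i, - (P i * D k * T i k) := by
    simp only [sub_eq_add_neg, Finset.sum_add_distrib]
  rw [hsplit, hG2, hB2]
  have e1 : (2 * G * A * B) * G ≤ 2 * M ^ 2 * (B * A) := by
    have : G ^ 2 * (B * A) ≤ M ^ 2 * (B * A) := by gcongr
    linarith
  have e2 : (2 * G * A) * E ≤ 2 * M * (A * E) := by
    have : G * (A * E) ≤ M * (A * E) := by gcongr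
    linarith
  have e3 : G ^ 2 * B ^ 2 ≤ M ^ 2 * B ^ 2 := by gcongr
  linarith

lemma memLp_sqrt {n : ℕ} {a : En n → ℝ} (ha : IsS a) (ha0 : ∀ x, 0 ≤ a x) :
    MemLp (fun x => √(a x)) 2 := by
  rw [memLp_two_iff_integrable_sq (ha.continuous.sqrt.aestronglyMeasurable)]
  simp only [Real.sq_sqrt (ha0 _)]
  exact ha.integrable

lemma cs_int {n : ℕ} {a b : En n → ℝ} (ha : IsS a) (hb : IsS b)
    (ha0 : ∀ x, 0 ≤ a x) (hb0 : ∀ x, 0 ≤ b x) :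
    Integrable (fun x => √(a x) * √(b x)) ∧
    ∫ x, √(a x) * √(b x) ≤ √(∫ x, a x) * √(∫ x, b x) := by
  refine ⟨(memLp_sqrt ha ha0).integrable_mul (memLp_sqrt hb hb0), ?_⟩
  have := integral_mul_le_Lp_mul_Lq_of_nonneg (μ := (volume : Measure (En n)))
    (p := 2) (q := 2) (f := fun x => √(a x)) (g := fun x => √(b x)) ⟨by norm_num, by norm_num, by norm_num⟩
    (Filter.Eventually.of_forall fun x => Real.sqrt_nonneg _)
    (Filter.Eventually.of_forall fun x => Real.sqrt_nonneg _)
    (by simpa using memLp_sqrt ha ha0) (by simpa using memLp_sqrt hb hb0)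
  simp only [Real.rpow_two, Real.sq_sqrt (ha0 _), Real.sq_sqrt (hb0 _)] at this
  simpa [Real.sqrt_eq_rpow] using this

/-- ∫ Δ(|∇d|²d)·Δd ≤ C(‖∇d‖∞²‖Δd‖₂‖∇²d‖₂ + ‖∇d‖∞‖∇²d‖₂‖∇Δd‖₂ + ‖∇d‖∞²‖Δd‖₂²),
with C depending only on n. -/
theorem statement11 (n : ℕ) (hn : 2 ≤ n) :
    ∃ C : ℝ, ∀ d : EuclideanSpace ℝ (Fin n) → EuclideanSpace ℝ (Fin 3),
      ContDiff ℝ (⊤ : ℕ∞) d → (∀ x, ‖d x‖ = 1) →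
      (∀ (i : Fin n) (k : Fin 3),
        ∃ g : SchwartzMap (EuclideanSpace ℝ (Fin n)) ℝ,
          ∀ x, g x = pd i (fun z => d z k) x) →
      (∫ x, ∑ k : Fin 3,
          lap (fun y => (∑ i, ∑ k' : Fin 3, (pd i (fun z => d z k') y) ^ 2) * d y k) x
            * lap (fun z => d z k) x)
        ≤ C * (gradLinf d ^ 2 * lapL2 d * hessL2 d
            + gradLinf d * hessL2 d * gradLapL2 d
            + gradLinf d ^ 2 * lapL2 d ^ 2) := by
  refine ⟨2, fun d hd hd1 hS => ?_⟩
  have hS' : ∀ i k, IsS (pd i (fun z => d z k)) := hS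
  have hdiff : ∀ k, Differentiable ℝ (fun z => d z k) := by
    intro k
    have : Differentiable ℝ d := hd.differentiable (by simp)
    exact fun x => ((EuclideanSpace.proj k : EuclideanSpace ℝ (Fin 3) →L[ℝ] ℝ).differentiableAt).comp x (this x)
  have hdsum : ∀ x, ∑ k, d x k ^ 2 = 1 := by
    intro x
    have := EuclideanSpace.real_norm_sq_eq (d x)
    rw [hd1 x] at this
    linarith
  have hdb : ∀ k x, |d x k| ≤ 1 := by
    intro k x
    have := hdsum x
    have h2 : d x k ^ 2 ≤ ∑ k, d x k ^ 2 :=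
      Finset.single_le_sum (f := fun k => d x k ^ 2) (fun _ _ => sq_nonneg _) (Finset.mem_univ k)
    exact abs_le_one_iff_mul_self_le_one.2 (by nlinarith)
  have htemp : ∀ k, (fun z => d z k).HasTemperateGrowth := fun k =>
    temperate_of_pd (hdiff k) (fun i => hS' i k) 1 (hdb k)
  -- abbreviations
  set g : Fin n → Fin 3 → En n → ℝ := fun i k => pd i (fun z => d z k) with hg
  set L : Fin 3 → En n → ℝ := fun k => lap (fun z => d z k) with hL
  set F : En n → ℝ := fun y => ∑ i, ∑ k', (pd i (fun z => d z k') y) ^ 2 with hF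
  have hgS : ∀ i k, IsS (g i k) := hS'
  have hLS : ∀ k, IsS (L k) := fun k => IsS.lap fun i => hS' i k
  have hFS : IsS F := IsS.sum fun i => IsS.sum fun k => (hgS i k).sq
  have hu : ∀ k, IsS (fun y => F y * d y k) := fun k => by
    simpa only [mul_comm] using hFS.tmul (htemp k)
  have hdk : ∀ {f : En n → ℝ} (k), IsS f → IsS (fun y => f y * d y k) := fun k hf => by
    simpa only [mul_comm] using hf.tmul (htemp k)
  have hpF : ∀ i x, pd i F x = 2 * ∑ j, ∑ l, g j l x * pd i (g j l) x := by
    intro i x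
    have h1 : pd i F x = ∑ j, pd i (fun y => ∑ l, g j l y ^ 2) x :=
      pd_sum i x fun j => (IsS.sum fun l => (hgS j l).sq).differentiable x
    rw [h1, Finset.mul_sum]
    refine Finset.sum_congr rfl fun j _ => ?_
    rw [pd_sum i x fun l => (hgS j l).sq.differentiable x, Finset.mul_sum]
    refine Finset.sum_congr rfl fun l _ => ?_
    simp only [sq]
    rw [pd_mul i x ((hgS j l).differentiable x) ((hgS j l).differentiable x)]
    ring
  have hLg : ∀ k x, ∑ i, pd i (g i k) x = L k x := fun k x => rfl
  -- integration by parts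
  have key : ∀ k i, ∫ x, pd i (pd i (fun y => F y * d y k)) x * L k x
      = ∫ x, ((pd i F x * g i k x * L k x - pd i F x * d x k * pd i (L k) x)
          + F x * pd i (g i k) x * L k x) := by
    intro k i
    rw [((hu k).pd i).ibp (hLS k) i]
    have e1 : ∀ x, pd i (fun y => F y * d y k) x * pd i (L k) x
        = pd i F x * d x k * pd i (L k) x + F x * g i k x * pd i (L k) x := by
      intro x
      rw [pd_mul i x (hFS.differentiable x) (hdiff k x)]
      ring
    have i1 : Integrable (fun x => pd i F x * d x k * pd i (L k) x) :=
      ((hdk k (hFS.pd i)).mul ((hLS k).pd i)).integrable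
    have i2 : Integrable (fun x => F x * g i k x * pd i (L k) x) :=
      ((hFS.mul (hgS i k)).mul ((hLS k).pd i)).integrable
    have i3 : Integrable (fun x => pd i F x * g i k x * L k x) :=
      (((hFS.pd i).mul (hgS i k)).mul (hLS k)).integrable
    have i4 : Integrable (fun x => F x * pd i (g i k) x * L k x) :=
      ((hFS.mul ((hgS i k).pd i)).mul (hLS k)).integrable
    have e2 : ∫ x, (pd i F x * g i k x * L k x + F x * pd i (g i k) x * L k x)
        = - ∫ x, F x * g i k x * pd i (L k) x := by
      rw [← (hFS.mul (hgS i k)).ibp (hLS k) i]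
      refine integral_congr_ae (Filter.Eventually.of_forall fun x => ?_)
      simp only
      rw [pd_mul i x (hFS.differentiable x) ((hgS i k).differentiable x)]
      ring
    simp only [e1]
    have i5 : Integrable (fun x => pd i F x * g i k x * L k x
        - pd i F x * d x k * pd i (L k) x) := i3.sub i1
    rw [integral_add i1 i2, integral_add i5 i4, integral_sub i3 i1]
    rw [integral_add i3 i4] at e2
    linarith
  have hI : ∀ k i, Integrable (fun x =>
      (pd i F x * g i k x * L k x - pd i F x * d x k * pd i (L k) x)
          + F x * pd i (g i k) x * L k x) := fun k i =>
    (((((hFS.pd i).mul (hgS i k)).mul (hLS k)).integrable).sub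
      ((hdk k (hFS.pd i)).mul ((hLS k).pd i)).integrable).add
      ((hFS.mul ((hgS i k).pd i)).mul (hLS k)).integrable
  have hmain : (∫ x, ∑ k : Fin 3, lap (fun y => F y * d y k) x * L k x)
      = ∫ x, (∑ k, ∑ i, (pd i F x * g i k x * L k x - pd i F x * d x k * pd i (L k) x)
          + F x * ∑ k, L k x ^ 2) := by
    have h0 : ∀ k i, Integrable (fun x => pd i (pd i (fun y => F y * d y k)) x * L k x) :=
      fun k i => ((((hu k).pd i).pd i).mul (hLS k)).integrable
    calc _ = ∫ x, ∑ k, ∑ i, pd i (pd i (fun y => F y * d y k)) x * L k x := by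
            simp only [lap, Finset.sum_mul]
      _ = ∑ k, ∑ i, ∫ x, pd i (pd i (fun y => F y * d y k)) x * L k x := by
            rw [integral_finsetSum _ fun k _ => integrable_finsetSum _ fun i _ => h0 k i]
            exact Finset.sum_congr rfl fun k _ => integral_finsetSum _ fun i _ => h0 k i
      _ = ∑ k, ∑ i, ∫ x, ((pd i F x * g i k x * L k x - pd i F x * d x k * pd i (L k) x)
          + F x * pd i (g i k) x * L k x) := by simp only [key]
      _ = ∫ x, ∑ k, ∑ i, ((pd i F x * g i k x * L k x - pd i F x * d x k * pd i (L k) x)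
          + F x * pd i (g i k) x * L k x) := by
            rw [integral_finsetSum _ fun k _ => integrable_finsetSum _ fun i _ => hI k i]
            exact Finset.sum_congr rfl fun k _ => (integral_finsetSum _ fun i _ => hI k i).symm
      _ = _ := by
            refine integral_congr_ae (Filter.Eventually.of_forall fun x => ?_)
            simp only [Finset.sum_add_distrib]
            congr 1
            rw [Finset.mul_sum]
            refine Finset.sum_congr rfl fun k _ => ?_
            rw [← Finset.sum_mul, ← Finset.mul_sum, hLg]
            ring
  have hint : Integrable (fun x => ∑ k, ∑ i, (pd i F x * g i k x * L k x
      - pd i F x * d x k * pd i (L k) x) + F x * ∑ k, L k x ^ 2) := by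
    refine Integrable.add (integrable_finsetSum _ fun k _ => integrable_finsetSum _ fun i _ =>
      ((((hFS.pd i).mul (hgS i k)).mul (hLS k)).integrable).sub
      ((hdk k (hFS.pd i)).mul ((hLS k).pd i)).integrable) ?_
    exact (hFS.mul (IsS.sum fun k => (hLS k).sq)).integrable
  -- essential supremum
  set M := gradLinf d with hM
  have hae : ∀ᵐ x : En n, √(F x) ≤ M := by
    obtain ⟨C, hC⟩ := hFS.bdd
    refine ae_le_essSup ⟨√C, ?_⟩
    rw [Filter.eventually_map]
    exact Filter.Eventually.of_forall fun x => Real.sqrt_le_sqrt ((le_abs_self _).trans (hC x))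
  have hM0 : 0 ≤ M := by
    obtain ⟨x, hx⟩ := hae.exists
    exact (Real.sqrt_nonneg _).trans hx
  -- quadratic densities
  set a : En n → ℝ := fun x => ∑ k, L k x ^ 2 with ha
  set b : En n → ℝ := fun x => ∑ i, ∑ j, ∑ k, pd i (g j k) x ^ 2 with hb
  set c : En n → ℝ := fun x => ∑ i, ∑ k, pd i (L k) x ^ 2 with hc
  have haS : IsS a := IsS.sum fun k => (hLS k).sq
  have hbS : IsS b := IsS.sum fun i => IsS.sum fun j => IsS.sum fun k => ((hgS j k).pd i).sq
  have hcS : IsS c := IsS.sum fun i => IsS.sum fun k => ((hLS k).pd i).sq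
  have ha0 : ∀ x, 0 ≤ a x := fun x => by positivity
  have hb0 : ∀ x, 0 ≤ b x := fun x => by positivity
  have hc0 : ∀ x, 0 ≤ c x := fun x => by positivity
  have hlap : lapL2 d = √(∫ x, a x) := by
    unfold lapL2
    rw [integral_finsetSum _ fun k _ => (hLS k).sq.integrable]
  have hhess : hessL2 d = √(∫ x, b x) := by
    unfold hessL2
    rw [integral_finsetSum _ fun i _ => (IsS.sum fun j => IsS.sum fun k =>
      ((hgS j k).pd i).sq).integrable]
    congr 1
    refine Finset.sum_congr rfl fun i _ => ?_
    rw [integral_finsetSum _ fun j _ => (IsS.sum fun k => ((hgS j k).pd i).sq).integrable]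
    refine Finset.sum_congr rfl fun j _ => ?_
    rw [integral_finsetSum _ fun k _ => ((hgS j k).pd i).sq.integrable]
  have hgl : gradLapL2 d = √(∫ x, c x) := by
    unfold gradLapL2
    rw [integral_finsetSum _ fun i _ => (IsS.sum fun k => ((hLS k).pd i).sq).integrable]
    congr 1
    refine Finset.sum_congr rfl fun i _ => ?_
    rw [integral_finsetSum _ fun k _ => ((hLS k).pd i).sq.integrable]
  obtain ⟨j1, c1⟩ := cs_int haS hbS ha0 hb0
  obtain ⟨j2, c2⟩ := cs_int hbS hcS hb0 hc0
  have hbound : (∫ x, (∑ k, ∑ i, (pd i F x * g i k x * L k x - pd i F x * d x k * pd i (L k) x)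
          + F x * ∑ k, L k x ^ 2))
      ≤ ∫ x, (2 * M ^ 2 * (√(a x) * √(b x)) + 2 * M * (√(b x) * √(c x)) + M ^ 2 * a x) := by
    refine integral_mono_ae hint
      (((j1.const_mul _).add (j2.const_mul _)).add (haS.integrable.const_mul _)) ?_
    filter_upwards [hae] with x hx
    exact pointwise (fun i k => g i k x) (fun i j k => pd i (g j k) x) (fun k => L k x)
      (fun k => d x k) (fun i k => pd i (L k) x) (fun i => pd i F x) M (fun i => hpF i x)
      (hdsum x) hx
  have j3 : Integrable (fun x => 2 * M ^ 2 * (√(a x) * √(b x)) + 2 * M * (√(b x) * √(c x))) :=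
    (j1.const_mul _).add (j2.const_mul _)
  rw [integral_add j3 (haS.integrable.const_mul _),
    integral_add (j1.const_mul _) (j2.const_mul _), integral_const_mul, integral_const_mul,
    integral_const_mul] at hbound
  have hA2 : lapL2 d ^ 2 = ∫ x, a x := by
    rw [hlap, Real.sq_sqrt (integral_nonneg ha0)]
  have hA0 : 0 ≤ lapL2 d ^ 2 := sq_nonneg _
  rw [← hlap, ← hhess] at c1
  rw [← hhess, ← hgl] at c2
  rw [← hA2] at hbound
  have f1 := mul_le_mul_of_nonneg_left c1 (by positivity : 0 ≤ 2 * M ^ 2)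
  have f2 := mul_le_mul_of_nonneg_left c2 (by positivity : 0 ≤ 2 * M)
  have f3 : 0 ≤ M ^ 2 * lapL2 d ^ 2 := by positivity
  refine (hmain.trans_le hbound).trans ?_
  linarith
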